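/- Let q = q(n) satisfy 0.98·log(n)/n ≤ q ≤ 1.01·log(n)/n. Then with high probability, every two distinct vertices of the Erdős–Rényi random graph G_{n,q} that both have degree at most (1/10)·log n are at graph distance at least 5 from each other in G_{n,q}. -/

import Mathlib

open MeasureTheory Filter

/-- The Bernoulli measure on `Bool` with success probability `p` (clamped into `[0,1]`;
for `0 ≤ p ≤ 1` this is the genuine Bernoulli measure). -/
noncomputable def bernoulliM (p : ℝ) : Measure Bool :=
  (PMF.bernoulli (min (Real.toNNReal p) 1) (min_le_right _ _)).toMeasure

instance (p : ℝ) : IsProbabilityMeasure (bernoulliM p) := by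
  unfold bernoulliM; infer_instance

/-- The Erdős–Rényi random graph `G_{n,p}`: each unordered pair of vertices of `Fin n`
is independently present with probability `p`. -/
noncomputable def gnp (n : ℕ) (p : ℝ) : Measure (Sym2 (Fin n) → Bool) :=
  Measure.pi fun _ => bernoulliM p

/-- The degree of the vertex `v` in the graph described by `ω`. -/
def degB {n : ℕ} (ω : Sym2 (Fin n) → Bool) (v : Fin n) : ℕ :=
  (Finset.univ.filter fun u => u ≠ v ∧ ω s(u, v) = true).card

/-- The simple graph on `Fin n` described by `ω`. -/
def graphOf {n : ℕ} (ω : Sym2 (Fin n) → Bool) : SimpleGraph (Fin n) where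
  Adj u v := u ≠ v ∧ ω s(u, v) = true
  symm := by
    refine ⟨?_⟩
    intro u v h
    refine ⟨h.1.symm, ?_⟩
    rw [Sym2.eq_swap]
    exact h.2
  loopless := ⟨fun v h => h.1 rfl⟩

/-!
Fix a path on `k + 1` vertices. Its `k` edges and the pairs joining either endpoint to a vertex off
the path are distinct, hence independent, so an exponential Markov inequality with parameter `t`
bounds the probability that the path is present and has endpoints of degree at most `d` by
`exp (2 t d) p ^ k (1 - p (1 - exp (-t))) ^ (2 (n - k - 1))`. Summing over the at most `n ^ (k + 1)`
paths with `d = a log n` and `x = n p ≥ c log n`, the expected number of such paths is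
`O (x ^ k exp (-η x))` with `η = 2 (1 - exp (-t)) - (1 + 2 t a) / c`. The optimal `t = log (c / a)`
makes `η` positive exactly when the large deviation rate `a log (a / c) - a + c` of a Poisson
variable of mean `c` exceeds `1 / 2`.
-/

section Bernoulli

variable {p : ℝ}

lemma bernoulliM_real_singleton_true (hp₀ : 0 ≤ p) (hp₁ : p ≤ 1) :
    (bernoulliM p).real {true} = p := by
  have hmass : bernoulliM p {true} = ENNReal.ofNNReal (min (Real.toNNReal p) 1) :=
    PMF.toMeasure_apply_singleton _ _ (measurableSet_singleton true)
  rw [measureReal_def, hmass, min_eq_left (Real.toNNReal_le_one.mpr hp₁), ENNReal.coe_toReal,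
    Real.coe_toNNReal p hp₀]

lemma integral_bernoulliM (hp₀ : 0 ≤ p) (hp₁ : p ≤ 1) (f : Bool → ℝ) :
    ∫ b, f b ∂bernoulliM p = p * f true + (1 - p) * f false := by
  have hfalse : (bernoulliM p).real {false} = 1 - p := by
    have hcompl : ({false} : Set Bool) = {true}ᶜ := (Bool.compl_singleton true).symm
    rw [hcompl, probReal_compl_eq_one_sub (measurableSet_singleton true),
      bernoulliM_real_singleton_true hp₀ hp₁]
  rw [integral_fintype .of_finite, Fintype.sum_bool, bernoulliM_real_singleton_true hp₀ hp₁,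
    hfalse, smul_eq_mul, smul_eq_mul]

end Bernoulli

section ExponentialTilt

variable {ι : Type*} [DecidableEq ι] {T S : Finset ι} {p t : ℝ}

/-- The factor contributed by a coordinate `e` in state `b` to the exponential weight
`1[all of T is on] * exp (-t * #{e ∈ S | e is on})`, for disjoint `T` and `S`. -/
noncomputable def tiltedFactor (T S : Finset ι) (t : ℝ) (e : ι) (b : Bool) : ℝ :=
  if e ∈ T then (if b then 1 else 0) else if e ∈ S then (if b then Real.exp (-t) else 1) else 1

lemma tiltedFactor_nonneg (e : ι) (b : Bool) : 0 ≤ tiltedFactor T S t e b := by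
  unfold tiltedFactor
  split_ifs <;> positivity

lemma integral_tiltedFactor (hp₀ : 0 ≤ p) (hp₁ : p ≤ 1) (e : ι) :
    ∫ b, tiltedFactor T S t e b ∂bernoulliM p =
      if e ∈ T then p else if e ∈ S then 1 - p * (1 - Real.exp (-t)) else 1 := by
  rw [integral_bernoulliM hp₀ hp₁]
  simp only [tiltedFactor, if_true, Bool.false_eq_true, if_false]
  split_ifs <;> ring

variable [Fintype ι]

lemma prod_ite_mem_ite_mem_of_disjoint {M : Type*} [CommMonoid M] (hTS : Disjoint T S)
    (f g : ι → M) :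
    ∏ e, (if e ∈ T then f e else if e ∈ S then g e else 1) =
      (∏ e ∈ T, f e) * ∏ e ∈ S, g e := by
  have hsplit (e : ι) : (if e ∈ T then f e else if e ∈ S then g e else 1) =
      (if e ∈ T then f e else 1) * (if e ∈ S then g e else 1) := by
    have := fun he : e ∈ T => Finset.disjoint_left.mp hTS he
    split_ifs <;> simp_all
  simp_rw [hsplit, Finset.prod_mul_distrib, Finset.prod_ite_mem, Finset.univ_inter]

lemma prod_tiltedFactor (hTS : Disjoint T S) {ω : ι → Bool} (hω : ∀ e ∈ T, ω e = true) :
    ∏ e, tiltedFactor T S t e (ω e) = Real.exp (-t * (S.filter fun e => ω e = true).card) := by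
  unfold tiltedFactor
  rw [prod_ite_mem_ite_mem_of_disjoint hTS, Finset.prod_eq_one fun e he => if_pos (hω e he),
    one_mul, Finset.prod_ite, Finset.prod_const, Finset.prod_const_one, mul_one,
    ← Real.exp_nat_mul, mul_comm]

lemma integral_prod_tiltedFactor (hp₀ : 0 ≤ p) (hp₁ : p ≤ 1) (hTS : Disjoint T S) :
    ∫ ω, ∏ e, tiltedFactor T S t e (ω e) ∂Measure.pi (fun _ : ι => bernoulliM p) =
      p ^ T.card * (1 - p * (1 - Real.exp (-t))) ^ S.card := by
  simp_rw [integral_fintype_prod_eq_prod, integral_tiltedFactor hp₀ hp₁]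
  rw [prod_ite_mem_ite_mem_of_disjoint hTS, Finset.prod_const, Finset.prod_const]

end ExponentialTilt

lemma measureReal_forall_mem_and_card_filter_le {ι : Type*} [Fintype ι] {T S : Finset ι}
    {p t : ℝ} (hp₀ : 0 ≤ p) (hp₁ : p ≤ 1) (ht : 0 ≤ t) (hTS : Disjoint T S) (b : ℝ) :
    (Measure.pi fun _ : ι => bernoulliM p).real
        {ω | (∀ e ∈ T, ω e = true) ∧ ((S.filter fun e => ω e = true).card : ℝ) ≤ b} ≤
      Real.exp (t * b) * (p ^ T.card * (1 - p * (1 - Real.exp (-t))) ^ S.card) := by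
  classical
  rw [← integral_prod_tiltedFactor hp₀ hp₁ hTS, ← integral_const_mul,
    ← integral_indicator_one (Set.toFinite _).measurableSet]
  refine integral_mono .of_finite .of_finite (Set.indicator_le' (fun ω hω => ?_) fun ω _ => ?_)
  · have hexponent : 0 ≤ t * b + -t * (S.filter fun e => ω e = true).card := by
      linarith [mul_le_mul_of_nonneg_left hω.2 ht]
    rw [prod_tiltedFactor hTS hω.1, ← Real.exp_add]
    exact Real.one_le_exp hexponent
  · exact mul_nonneg (Real.exp_nonneg _)
      (Finset.prod_nonneg fun e _ => tiltedFactor_nonneg e (ω e))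

section PathsAndStars

variable {V : Type*} [DecidableEq V] {k : ℕ} {x : Fin (k + 1) → V} {U : Finset V} {v w : V}

/-- The edges of the path visiting the vertices `x 0, x 1, …, x k` in this order. -/
def pathEdges (x : Fin (k + 1) → V) : Finset (Sym2 V) :=
  Finset.univ.image fun i : Fin k => s(x i.castSucc, x i.succ)

/-- The pairs joining the centre `v` to the vertices of `U`. -/
def starEdges (U : Finset V) (v : V) : Finset (Sym2 V) :=
  U.image fun u => s(u, v)

lemma card_pathEdges (hx : Function.Injective x) : (pathEdges x).card = k := by
  have hinj : Function.Injective fun i : Fin k => s(x i.castSucc, x i.succ) := by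
    intro i j hij
    simp only [Sym2.eq_iff, hx.eq_iff, Fin.ext_iff, Fin.val_castSucc, Fin.val_succ] at hij
    omega
  rw [pathEdges, Finset.card_image_of_injective _ hinj, Finset.card_univ, Fintype.card_fin]

lemma card_starEdges (U : Finset V) (v : V) : (starEdges U v).card = U.card :=
  Finset.card_image_of_injective _ fun _ _ h => Sym2.congr_left.mp h

lemma disjoint_starEdges (hvw : v ≠ w) (hw : w ∉ U) :
    Disjoint (starEdges U v) (starEdges U w) := by
  simp only [starEdges, Finset.disjoint_left, Finset.mem_image]
  rintro _ ⟨u, hu, rfl⟩ ⟨u', -, h⟩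
  rcases Sym2.eq_iff.mp h with ⟨-, hwv⟩ | ⟨-, hwu⟩
  · exact hvw hwv.symm
  · exact hw (hwu ▸ hu)

lemma disjoint_pathEdges_starEdges (hU : ∀ i, x i ∉ U) :
    Disjoint (pathEdges x) (starEdges U v) := by
  simp only [pathEdges, starEdges, Finset.disjoint_left, Finset.mem_image]
  rintro _ ⟨i, -, rfl⟩ ⟨u, hu, h⟩
  rcases Sym2.eq_iff.mp h with ⟨hui, -⟩ | ⟨hui, -⟩ <;> exact hU _ (hui ▸ hu)

variable [Fintype V]

/-- The pairs joining an end of the path `x 0, …, x k` to a vertex off the path. Pairs inside the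
path are left out so that these are disjoint from the edges of the path. -/
def pathEndEdges (x : Fin (k + 1) → V) : Finset (Sym2 V) :=
  starEdges (Finset.univ.image x)ᶜ (x 0) ∪ starEdges (Finset.univ.image x)ᶜ (x (Fin.last k))

lemma apply_notMem_compl_image_univ {ι : Type*} [Fintype ι] (x : ι → V) (i : ι) :
    x i ∉ (Finset.univ.image x)ᶜ :=
  Finset.notMem_compl.mpr (Finset.mem_image_of_mem x (Finset.mem_univ i))

lemma card_pathEndEdges (hk : k ≠ 0) (hx : Function.Injective x) :
    (pathEndEdges x).card = 2 * (Fintype.card V - (k + 1)) := by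
  have hends : x 0 ≠ x (Fin.last k) := hx.ne (by simpa [Fin.ext_iff] using hk.symm)
  have hcard : (Finset.univ.image x)ᶜ.card = Fintype.card V - (k + 1) := by
    rw [Finset.card_compl, Finset.card_image_of_injective _ hx, Finset.card_univ, Fintype.card_fin]
  rw [pathEndEdges, Finset.card_union_of_disjoint
    (disjoint_starEdges hends (apply_notMem_compl_image_univ x _)), card_starEdges, card_starEdges,
    hcard, two_mul]

lemma disjoint_pathEdges_pathEndEdges (x : Fin (k + 1) → V) :
    Disjoint (pathEdges x) (pathEndEdges x) :=
  Finset.disjoint_union_right.mpr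
    ⟨disjoint_pathEdges_starEdges (apply_notMem_compl_image_univ x),
      disjoint_pathEdges_starEdges (apply_notMem_compl_image_univ x)⟩

end PathsAndStars

lemma exists_injective_chain_of_walk {V : Type*} {G : SimpleGraph V} {v w : V} (hvw : v ≠ w)
    (P : G.Walk v w) :
    ∃ k, 1 ≤ k ∧ k ≤ P.length ∧ ∃ x : Fin (k + 1) → V, Function.Injective x ∧
      x 0 = v ∧ x (Fin.last k) = w ∧ ∀ i : Fin k, G.Adj (x i.castSucc) (x i.succ) := by
  classical
  have hpos : 1 ≤ P.bypass.length :=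
    Nat.one_le_iff_ne_zero.mpr fun h => hvw (SimpleGraph.Walk.eq_of_length_eq_zero h)
  refine ⟨P.bypass.length, hpos, P.length_bypass_le_length, fun i => P.bypass.getVert i,
    fun i j hij => ?_, P.bypass.getVert_zero, P.bypass.getVert_length,
    fun i => P.bypass.adj_getVert_succ i.2⟩
  exact Fin.ext (P.bypass_isPath.getVert_injOn (Nat.le_of_lt_succ i.2) (Nat.le_of_lt_succ j.2) hij)

section RandomGraph

variable {n : ℕ} {p t : ℝ}

instance (n : ℕ) (p : ℝ) : IsProbabilityMeasure (gnp n p) := by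
  unfold gnp; infer_instance

/-- The event that any two distinct vertices of degree at most `d` are at distance at least `ℓ`;
distance is expressed through lengths of walks because `SimpleGraph.dist` is `0` between different
components. -/
def lowDegreeFarApart (n : ℕ) (d : ℝ) (ℓ : ℕ) : Set (Sym2 (Fin n) → Bool) :=
  {ω | ∀ v w : Fin n, v ≠ w → (degB ω v : ℝ) ≤ d → (degB ω w : ℝ) ≤ d →
    ∀ P : (graphOf ω).Walk v w, ℓ ≤ P.length}

/-- The event that all edges of the path `x 0, …, x k` are present and both its ends have degree at
most `d`. -/
def lowDegreePath {k : ℕ} (x : Fin (k + 1) → Fin n) (d : ℝ) : Set (Sym2 (Fin n) → Bool) :=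
  {ω | (∀ e ∈ pathEdges x, ω e = true) ∧
    (degB ω (x 0) : ℝ) ≤ d ∧ (degB ω (x (Fin.last k)) : ℝ) ≤ d}

lemma card_filter_starEdges_le_degB (ω : Sym2 (Fin n) → Bool) {U : Finset (Fin n)} {v : Fin n}
    (hv : v ∉ U) : ((starEdges U v).filter fun e => ω e = true).card ≤ degB ω v := by
  rw [starEdges, Finset.filter_image]
  refine Finset.card_image_le.trans (Finset.card_le_card fun u hu => ?_)
  obtain ⟨huU, huv⟩ := Finset.mem_filter.mp hu
  exact Finset.mem_filter.mpr ⟨Finset.mem_univ u, fun h => hv (h ▸ huU), huv⟩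

lemma card_filter_pathEndEdges_le_degB_add_degB {k : ℕ} (ω : Sym2 (Fin n) → Bool)
    (x : Fin (k + 1) → Fin n) :
    ((pathEndEdges x).filter fun e => ω e = true).card ≤
      degB ω (x 0) + degB ω (x (Fin.last k)) := by
  rw [pathEndEdges, Finset.filter_union]
  exact (Finset.card_union_le _ _).trans (add_le_add
    (card_filter_starEdges_le_degB ω (apply_notMem_compl_image_univ x _))
    (card_filter_starEdges_le_degB ω (apply_notMem_compl_image_univ x _)))

lemma gnp_real_lowDegreePath_le {k : ℕ} (hk : k ≠ 0) (hp₀ : 0 ≤ p) (hp₁ : p ≤ 1) (ht : 0 ≤ t)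
    (d : ℝ) {x : Fin (k + 1) → Fin n} (hx : Function.Injective x) :
    (gnp n p).real (lowDegreePath x d) ≤
      Real.exp (2 * t * d) * (p ^ k * (1 - p * (1 - Real.exp (-t))) ^ (2 * (n - (k + 1)))) := by
  have hsub : lowDegreePath x d ⊆ {ω | (∀ e ∈ pathEdges x, ω e = true) ∧
      (((pathEndEdges x).filter fun e => ω e = true).card : ℝ) ≤ 2 * d} := by
    rintro ω ⟨hpath, hfirst, hlast⟩
    have hdeg : (((pathEndEdges x).filter fun e => ω e = true).card : ℝ) ≤
        degB ω (x 0) + degB ω (x (Fin.last k)) :=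
      mod_cast card_filter_pathEndEdges_le_degB_add_degB ω x
    exact ⟨hpath, by linarith⟩
  refine (measureReal_mono hsub).trans ((measureReal_forall_mem_and_card_filter_le hp₀ hp₁ ht
    (disjoint_pathEdges_pathEndEdges x) (2 * d)).trans_eq ?_)
  rw [card_pathEdges hx, card_pathEndEdges hk hx, Fintype.card_fin, ← mul_assoc t, mul_comm t]

lemma compl_lowDegreeFarApart_subset (n : ℕ) (d : ℝ) (ℓ : ℕ) :
    (lowDegreeFarApart n d ℓ)ᶜ ⊆ ⋃ k ∈ Finset.Ico 1 ℓ,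
      ⋃ x ∈ Finset.univ.filter fun x : Fin (k + 1) → Fin n => Function.Injective x,
        lowDegreePath x d := by
  intro ω hω
  simp only [lowDegreeFarApart, Set.mem_compl_iff, Set.mem_ofPred_eq, not_forall, not_le] at hω
  obtain ⟨v, w, hvw, hv, hw, P, hP⟩ := hω
  obtain ⟨k, hk, hkP, x, hx, rfl, rfl, hadj⟩ := exists_injective_chain_of_walk hvw P
  have hpath : ∀ e ∈ pathEdges x, ω e = true := by
    simpa [pathEdges] using fun i => (hadj i).2
  simp only [Set.mem_iUnion]
  exact ⟨k, Finset.mem_Ico.mpr ⟨hk, hkP.trans_lt hP⟩, x,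
    Finset.mem_filter.mpr ⟨Finset.mem_univ x, hx⟩, hpath, hv, hw⟩

lemma one_sub_mul_one_sub_exp_neg_nonneg (hp₀ : 0 ≤ p) (hp₁ : p ≤ 1) (t : ℝ) :
    0 ≤ 1 - p * (1 - Real.exp (-t)) := by
  linarith [mul_nonneg hp₀ (Real.exp_nonneg (-t))]

lemma gnp_real_compl_lowDegreeFarApart_le (hp₀ : 0 ≤ p) (hp₁ : p ≤ 1) (ht : 0 ≤ t)
    (n : ℕ) (d : ℝ) (ℓ : ℕ) :
    (gnp n p).real (lowDegreeFarApart n d ℓ)ᶜ ≤ ∑ k ∈ Finset.Ico 1 ℓ, (n : ℝ) ^ (k + 1) *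
      (Real.exp (2 * t * d) *
        (p ^ k * (1 - p * (1 - Real.exp (-t))) ^ (2 * (n - (k + 1))))) := by
  refine (measureReal_mono (compl_lowDegreeFarApart_subset n d ℓ) (measure_ne_top _ _)).trans
    ((measureReal_biUnion_finset_le _ _).trans (Finset.sum_le_sum fun k hk => ?_))
  have hcard : (Finset.univ.filter fun x : Fin (k + 1) → Fin n => Function.Injective x).card ≤
      n ^ (k + 1) := by
    simpa using Finset.card_filter_le Finset.univ fun x : Fin (k + 1) → Fin n => x.Injective
  have hnonneg := one_sub_mul_one_sub_exp_neg_nonneg hp₀ hp₁ t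
  refine (measureReal_biUnion_finset_le _ _).trans ((Finset.sum_le_card_nsmul _ _ _ fun x hx =>
    gnp_real_lowDegreePath_le (Nat.one_le_iff_ne_zero.mp (Finset.mem_Ico.mp hk).1) hp₀ hp₁ ht d
      (Finset.mem_filter.mp hx).2).trans ?_)
  rw [nsmul_eq_mul]
  gcongr
  exact_mod_cast hcard

end RandomGraph

section Asymptotics

variable {n : ℕ} {p t c a : ℝ}

lemma one_sub_mul_pow_two_mul_sub_le_exp {κ : ℝ} (hp₀ : 0 ≤ p) (hp₁ : p ≤ 1) (hκ₀ : 0 ≤ κ)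
    (hκ₁ : κ ≤ 1) (n m : ℕ) :
    (1 - p * κ) ^ (2 * (n - m)) ≤ Real.exp (2 * m) * Real.exp (-(2 * κ * (n * p))) := by
  have hpκ₁ : p * κ ≤ 1 := mul_le_one₀ hp₁ hκ₀ hκ₁
  have hsub : (n : ℝ) - m ≤ (n - m : ℕ) := sub_le_iff_le_add.mpr (mod_cast le_tsub_add)
  have hexponent : (2 * (n - m) : ℕ) * -(p * κ) ≤ 2 * m + -(2 * κ * (n * p)) := by
    push_cast
    linarith [mul_le_mul_of_nonneg_left hsub (mul_nonneg hp₀ hκ₀),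
      mul_le_mul_of_nonneg_left hpκ₁ (Nat.cast_nonneg (α := ℝ) m)]
  calc (1 - p * κ) ^ (2 * (n - m)) ≤ Real.exp (-(p * κ)) ^ (2 * (n - m)) :=
        pow_le_pow_left₀ (sub_nonneg.mpr hpκ₁) (Real.one_sub_le_exp_neg _) _
    _ = Real.exp ((2 * (n - m) : ℕ) * -(p * κ)) := (Real.exp_nat_mul _ _).symm
    _ ≤ Real.exp (2 * m) * Real.exp (-(2 * κ * (n * p))) := by
        rw [← Real.exp_add]
        exact Real.exp_le_exp.mpr hexponent

lemma natCast_mul_exp_mul_log_le_exp (hn : 1 ≤ n) (hc : 0 < c) (ht : 0 ≤ t) (ha : 0 ≤ a)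
    (hcp : c * Real.log n ≤ n * p) :
    n * Real.exp (2 * t * (a * Real.log n)) ≤ Real.exp ((1 + 2 * t * a) / c * (n * p)) := by
  have hn₀ : (0 : ℝ) < n := by exact_mod_cast hn
  calc n * Real.exp (2 * t * (a * Real.log n))
      = Real.exp ((1 + 2 * t * a) / c * (c * Real.log n)) := by
        nth_rw 1 [← Real.exp_log hn₀]
        rw [← Real.exp_add]
        congr 1
        field_simp
    _ ≤ Real.exp ((1 + 2 * t * a) / c * (n * p)) := by gcongr

lemma union_bound_term_le (hn : 1 ≤ n) (hc : 0 < c) (ht : 0 ≤ t) (ha : 0 ≤ a) (hp₀ : 0 ≤ p)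
    (hp₁ : p ≤ 1) (hcp : c * Real.log n ≤ n * p) (k : ℕ) :
    (n : ℝ) ^ (k + 1) * (Real.exp (2 * t * (a * Real.log n)) *
        (p ^ k * (1 - p * (1 - Real.exp (-t))) ^ (2 * (n - (k + 1))))) ≤
      Real.exp (2 * (k + 1 : ℕ)) * ((n * p) ^ k *
        Real.exp (-(2 * (1 - Real.exp (-t)) - (1 + 2 * t * a) / c) * (n * p))) := by
  have hnonneg := one_sub_mul_one_sub_exp_neg_nonneg hp₀ hp₁ t
  have hκ₀ : 0 ≤ 1 - Real.exp (-t) :=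
    sub_nonneg.mpr (Real.exp_le_one_iff.mpr (neg_nonpos.mpr ht))
  have hκ₁ : 1 - Real.exp (-t) ≤ 1 := sub_le_self _ (Real.exp_nonneg _)
  calc (n : ℝ) ^ (k + 1) * (Real.exp (2 * t * (a * Real.log n)) *
        (p ^ k * (1 - p * (1 - Real.exp (-t))) ^ (2 * (n - (k + 1)))))
      = (n * p) ^ k * ((n * Real.exp (2 * t * (a * Real.log n))) *
          (1 - p * (1 - Real.exp (-t))) ^ (2 * (n - (k + 1)))) := by ring
    _ ≤ (n * p) ^ k * (Real.exp ((1 + 2 * t * a) / c * (n * p)) *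
          (Real.exp (2 * (k + 1 : ℕ)) *
            Real.exp (-(2 * (1 - Real.exp (-t)) * (n * p))))) := by
        gcongr
        · exact natCast_mul_exp_mul_log_le_exp hn hc ht ha hcp
        · exact one_sub_mul_pow_two_mul_sub_le_exp hp₀ hp₁ hκ₀ hκ₁ n (k + 1)
    _ = _ := by
        rw [mul_left_comm (Real.exp _) (Real.exp _), ← Real.exp_add, mul_left_comm]
        ring_nf

lemma tendsto_sum_pow_mul_exp_neg_mul {η : ℝ} (hη : 0 < η) (s : Finset ℕ) (C : ℕ → ℝ) :
    Tendsto (fun x : ℝ => ∑ k ∈ s, C k * (x ^ k * Real.exp (-η * x))) atTop (nhds 0) := by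
  have hterm (k : ℕ) : Tendsto (fun x : ℝ => C k * (x ^ k * Real.exp (-η * x))) atTop (nhds 0) := by
    simpa using (tendsto_rpow_mul_exp_neg_mul_atTop_nhds_zero k η hη).const_mul (C k)
  simpa using tendsto_finsetSum s fun k _ => hterm k

lemma tendsto_log_natCast_atTop : Tendsto (fun n : ℕ => Real.log n) atTop atTop :=
  Real.tendsto_log_atTop.comp tendsto_natCast_atTop_atTop

lemma tendsto_measure_of_tendsto_measureReal_compl {α : Type*} {l : Filter α} {Ω : α → Type*}
    [∀ i, MeasurableSpace (Ω i)] {μ : ∀ i, Measure (Ω i)} [∀ i, IsProbabilityMeasure (μ i)]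
    {A : ∀ i, Set (Ω i)} (hA : ∀ i, MeasurableSet (A i))
    (h : Tendsto (fun i => (μ i).real (A i)ᶜ) l (nhds 0)) :
    Tendsto (fun i => μ i (A i)) l (nhds 1) := by
  have hreal : Tendsto (fun i => (μ i).real (A i)) l (nhds 1) := by
    simpa [probReal_compl_eq_one_sub (hA _)] using h.const_sub 1
  simpa using ENNReal.tendsto_ofReal hreal

theorem tendsto_gnp_lowDegreeFarApart (q : ℕ → ℝ) (hc : 0 < c) (ha : 0 ≤ a) (ht : 0 ≤ t)
    (hη : 0 < 2 * (1 - Real.exp (-t)) - (1 + 2 * t * a) / c) (ℓ : ℕ)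
    (hq : ∀ᶠ n : ℕ in atTop, c * Real.log n / n ≤ q n ∧ q n ≤ 1) :
    Tendsto (fun n : ℕ => gnp n (q n) (lowDegreeFarApart n (a * Real.log n) ℓ))
      atTop (nhds 1) := by
  have hlower : ∀ᶠ n : ℕ in atTop, c * Real.log n ≤ n * q n := by
    filter_upwards [hq, eventually_gt_atTop 0] with n hqn hn
    exact (div_le_iff₀' (by exact_mod_cast hn)).mp hqn.1
  have hmean : Tendsto (fun n : ℕ => n * q n) atTop atTop :=
    tendsto_atTop_mono' _ hlower (tendsto_log_natCast_atTop.const_mul_atTop hc)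
  refine tendsto_measure_of_tendsto_measureReal_compl (fun n => (Set.toFinite _).measurableSet)
    (squeeze_zero' (Eventually.of_forall fun n => measureReal_nonneg) ?_
      ((tendsto_sum_pow_mul_exp_neg_mul hη (Finset.Ico 1 ℓ)
        fun k => Real.exp (2 * (k + 1 : ℕ))).comp hmean))
  filter_upwards [hq, hlower, eventually_ge_atTop 1] with n hqn hcq hn
  have hq₀ : 0 ≤ q n := le_trans (by positivity) hqn.1
  exact (gnp_real_compl_lowDegreeFarApart_le hq₀ hqn.2 ht n _ ℓ).trans
    (Finset.sum_le_sum fun k _ => union_bound_term_le hn hc ht ha hq₀ hqn.2 hcq k)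

end Asymptotics

lemma eventually_mul_log_div_le_one (C : ℝ) : ∀ᶠ n : ℕ in atTop, C * Real.log n / n ≤ 1 := by
  have hlim : Tendsto (fun n : ℕ => C * Real.log n / n) atTop (nhds 0) := by
    simpa [mul_div_assoc] using (Real.isLittleO_log_id_atTop.tendsto_div_nhds_zero.comp
      (tendsto_natCast_atTop_atTop (R := ℝ))).const_mul C
  exact hlim.eventually_le_const one_pos

lemma half_lt_rate_one_tenth :
    (1 / 2 : ℝ) < 1 / 10 * Real.log (1 / 10 / 0.98) - 1 / 10 + 0.98 := by
  have hexp : 9.8 ≤ Real.exp 3 :=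
    calc (9.8 : ℝ) ≤ 2.7 ^ 3 := by norm_num
      _ ≤ Real.exp 1 ^ 3 := by
          gcongr
          linarith [Real.exp_one_gt_d9]
      _ = Real.exp 3 := by rw [← Real.exp_nat_mul]; norm_num
  have hlog : -3 ≤ Real.log (1 / 10 / 0.98) := by
    rw [Real.le_log_iff_exp_le (by norm_num), Real.exp_neg]
    exact (inv_anti₀ (by norm_num) hexp).trans_eq (by norm_num)
  linarith

theorem low_degree_vertices_far_apart_whp_general (q : ℕ → ℝ) {c a : ℝ} (ha : 0 < a)
    (hac : a ≤ c) (hrate : 1 / 2 < a * Real.log (a / c) - a + c) (ℓ : ℕ)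
    (hq : ∀ᶠ n : ℕ in atTop, c * Real.log n / n ≤ q n ∧ q n ≤ 1) :
    Tendsto (fun n : ℕ => gnp n (q n) (lowDegreeFarApart n (a * Real.log n) ℓ))
      atTop (nhds 1) := by
  have hc : 0 < c := ha.trans_le hac
  have ht : 0 ≤ Real.log (c / a) := Real.log_nonneg ((one_le_div ha).mpr hac)
  have hexp : Real.exp (-Real.log (c / a)) = a / c := by
    rw [Real.exp_neg, Real.exp_log (div_pos hc ha), inv_div]
  have hη : 0 < 2 * (1 - Real.exp (-Real.log (c / a))) - (1 + 2 * Real.log (c / a) * a) / c := by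
    have hlog : Real.log (c / a) = -Real.log (a / c) := by rw [← Real.log_inv, inv_div]
    calc 0 < 2 * (a * Real.log (a / c) - a + c - 1 / 2) / c :=
          div_pos (mul_pos two_pos (sub_pos.mpr hrate)) hc
      _ = _ := by
          rw [hexp, hlog]
          field_simp
          ring
  exact tendsto_gnp_lowDegreeFarApart q hc ha.le ht hη ℓ hq

/-- If `0.98·log n / n ≤ q = q(n) ≤ 1.01·log n / n`, then whp every two
distinct vertices of `G_{n,q}` of degree at most `(1/10)·log n` are at graph distance at
least `5` (i.e. every walk between them has length at least `5`; in particular this holds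
vacuously when there is no path). -/
theorem low_degree_vertices_far_apart_whp (q : ℕ → ℝ)
    (hq : ∀ᶠ n : ℕ in atTop,
      0.98 * Real.log n / n ≤ q n ∧ q n ≤ 1.01 * Real.log n / n) :
    Tendsto
      (fun n : ℕ =>
        gnp n (q n)
          {ω | ∀ v w : Fin n, v ≠ w →
              (degB ω v : ℝ) ≤ 1 / 10 * Real.log n →
              (degB ω w : ℝ) ≤ 1 / 10 * Real.log n →
              ∀ P : (graphOf ω).Walk v w, 5 ≤ P.length})
      atTop (nhds 1) :=
  low_degree_vertices_far_apart_whp_general q (by norm_num) (by norm_num)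
    half_lt_rate_one_tenth 5 ((hq.and (eventually_mul_log_div_le_one 1.01)).mono
      fun n h => ⟨h.1.1, h.1.2.trans h.2⟩)
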